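/- Let B_Z = {|0⟩, |1⟩}, B_X = {|+⟩, |−⟩}, and B_Y = {(|0⟩ + i|1⟩)/√2, (|0⟩ − i|1⟩)/√2} be the three eigenbases of the Pauli matrices σ_z, σ_x, σ_y, which form a complete set of three mutually unbiased bases of ℂ². Then for all unit vectors φ, χ ∈ ℂ², Σ_{B ∈ {B_Z, B_X, B_Y}} Σ_{i=0}^{1} |⟨b_i|φ⟩|² |⟨b_i|χ⟩|² ≤ 2. That is, every pure product state of two qubits satisfies the complete-MUB bound I_{d+1} ≤ 2 for d = 2. -/

import Mathlib

/-!
The left-hand side is a biquadratic form in `φ` and `χ`, and it satisfies the exact identity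
`I₃ + |φ₀χ₁ - φ₁χ₀|² = 2 ‖φ‖² ‖χ‖²` (`mub_sum_add_det`). In terms of Bloch vectors `r`, `s` of two
unit vectors it says `I₃ = (3 + r · s) / 2`, which equals `1 + |⟨φ|χ⟩|²`. Dropping the nonnegative
squared determinant gives the bound.
-/

open BigOperators

/-- Inner product ⟨a|ψ⟩ in ℂ². -/
noncomputable def braket (a ψ : Fin 2 → ℂ) : ℂ :=
  ∑ x, (starRingEnd ℂ) (a x) * ψ x

/-- Eigenbasis of σ_z : the computational basis {|0⟩, |1⟩}. -/
noncomputable def BZ : Fin 2 → Fin 2 → ℂ := fun i x => if x = i then 1 else 0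

/-- Eigenbasis of σ_x : the Hadamard basis {|+⟩, |−⟩}. -/
noncomputable def BX : Fin 2 → Fin 2 → ℂ := fun i x =>
  if i = 0 then ((1 / Real.sqrt 2 : ℝ) : ℂ)
  else if x = 0 then ((1 / Real.sqrt 2 : ℝ) : ℂ) else (-(1 / Real.sqrt 2 : ℝ) : ℝ)

/-- Eigenbasis of σ_y : {(|0⟩ + i|1⟩)/√2, (|0⟩ − i|1⟩)/√2}. -/
noncomputable def BY : Fin 2 → Fin 2 → ℂ := fun i x =>
  if x = 0 then ((1 / Real.sqrt 2 : ℝ) : ℂ)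
  else if i = 0 then Complex.I / (Real.sqrt 2 : ℝ) else -Complex.I / (Real.sqrt 2 : ℝ)

lemma norm_sq_braket_BZ (i : Fin 2) (ψ : Fin 2 → ℂ) :
    ‖braket (BZ i) ψ‖ ^ 2 = (ψ i).re ^ 2 + (ψ i).im ^ 2 := by
  have h : braket (BZ i) ψ = ψ i := by
    fin_cases i <;> simp [braket, BZ]
  rw [h, Complex.sq_norm, Complex.normSq_apply]
  ring

lemma inv_sqrt_two_sq : (√2 : ℝ)⁻¹ ^ 2 = 1 / 2 := by
  rw [inv_pow, Real.sq_sqrt (by norm_num)]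
  norm_num

lemma norm_sq_braket_BX (i : Fin 2) (ψ : Fin 2 → ℂ) :
    ‖braket (BX i) ψ‖ ^ 2 =
      (((ψ 0).re + (-1) ^ (i : ℕ) * (ψ 1).re) ^ 2
        + ((ψ 0).im + (-1) ^ (i : ℕ) * (ψ 1).im) ^ 2) / 2 := by
  have h : braket (BX i) ψ = (((√2 : ℝ)⁻¹ : ℝ) : ℂ) * (ψ 0 + (-1) ^ (i : ℕ) * ψ 1) := by
    fin_cases i <;> simp [braket, BX] <;> ring
  rw [h, norm_mul, mul_pow, Complex.norm_real, Real.norm_eq_abs, sq_abs, inv_sqrt_two_sq,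
    Complex.sq_norm, Complex.normSq_apply]
  fin_cases i <;> simp <;> ring

lemma norm_sq_braket_BY (i : Fin 2) (ψ : Fin 2 → ℂ) :
    ‖braket (BY i) ψ‖ ^ 2 =
      (((ψ 0).re + (-1) ^ (i : ℕ) * (ψ 1).im) ^ 2
        + ((ψ 0).im - (-1) ^ (i : ℕ) * (ψ 1).re) ^ 2) / 2 := by
  have h : braket (BY i) ψ =
      (((√2 : ℝ)⁻¹ : ℝ) : ℂ) * (ψ 0 - (-1) ^ (i : ℕ) * Complex.I * ψ 1) := by
    fin_cases i <;> simp [braket, BY] <;> ring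
  rw [h, norm_mul, mul_pow, Complex.norm_real, Real.norm_eq_abs, sq_abs, inv_sqrt_two_sq,
    Complex.sq_norm, Complex.normSq_apply]
  fin_cases i <;> simp <;> ring

/-- The defect in the complete-MUB bound is the squared modulus of the determinant of `φ` and `χ`;
no normalization is needed because both sides are homogeneous. -/
lemma mub_sum_add_det (φ χ : Fin 2 → ℂ) :
    (∑ i, ‖braket (BZ i) φ‖ ^ 2 * ‖braket (BZ i) χ‖ ^ 2)
      + (∑ i, ‖braket (BX i) φ‖ ^ 2 * ‖braket (BX i) χ‖ ^ 2)
      + (∑ i, ‖braket (BY i) φ‖ ^ 2 * ‖braket (BY i) χ‖ ^ 2)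
      + ‖φ 0 * χ 1 - φ 1 * χ 0‖ ^ 2
      = 2 * (∑ x, ‖φ x‖ ^ 2) * (∑ x, ‖χ x‖ ^ 2) := by
  simp only [norm_sq_braket_BZ, norm_sq_braket_BX, norm_sq_braket_BY, Fin.sum_univ_two,
    Fin.val_zero, Fin.val_one, pow_zero, pow_one]
  simp only [Complex.sq_norm, Complex.normSq_apply, Complex.sub_re, Complex.sub_im, Complex.mul_re, Complex.mul_im]
  ring

/-- Every pure product state of two qubits satisfies the complete-MUB bound
`I₃ = Σ_{B ∈ {B_Z, B_X, B_Y}} Σ_i |⟨b_i|φ⟩|² |⟨b_i|χ⟩|² ≤ 2`. -/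
theorem stmt5 (φ χ : Fin 2 → ℂ)
    (hφ : ∑ x, ‖φ x‖ ^ 2 = 1) (hχ : ∑ x, ‖χ x‖ ^ 2 = 1) :
    (∑ i, ‖braket (BZ i) φ‖ ^ 2 * ‖braket (BZ i) χ‖ ^ 2)
      + (∑ i, ‖braket (BX i) φ‖ ^ 2 * ‖braket (BX i) χ‖ ^ 2)
      + (∑ i, ‖braket (BY i) φ‖ ^ 2 * ‖braket (BY i) χ‖ ^ 2) ≤ 2 := by
  have h := mub_sum_add_det φ χ
  rw [hφ, hχ] at h
  linarith [sq_nonneg ‖φ 0 * χ 1 - φ 1 * χ 0‖]
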